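/- arXiv:2102.11966 — 4 statements merged into one kernel-verified Lean document; each statement's English description precedes it below -/
import Mathlib

section
/- Let n ≥ 1 and let μ, μ̃ be partitions of n. Then (1/n!) · Σ_{π ∈ S_n} d_μ(π) · d_μ̃(π) = N_{μ,μ̃}, where the sum is over all permutations π of {1,…,n}. -/
/-- `dPart μ π` is the number of ordered tuples `(A_1, …, A_m)` of pairwise disjoint
subsets of `{0, …, n-1}` with union everything, `|A_i| = μ_i`, and each `A_i`
invariant under the permutation `π`. -/
noncomputable def dPart {n m : ℕ} (μ : Fin m → ℕ) (π : Equiv.Perm (Fin n)) : ℕ :=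
  Nat.card {A : Fin m → Finset (Fin n) //
    (∀ i j, i ≠ j → Disjoint (A i) (A j)) ∧
    (Finset.univ.biUnion A = Finset.univ) ∧
    (∀ i, (A i).card = μ i) ∧
    (∀ i, (A i).image π = A i)}

/-- `Nmat μ ν` is the number of `m × l` matrices of non-negative integers whose
`i`-th row sums to `μ i` and whose `j`-th column sums to `ν j`. -/
noncomputable def Nmat {m l : ℕ} (μ : Fin m → ℕ) (ν : Fin l → ℕ) : ℕ :=
  Nat.card {M : Fin m → Fin l → ℕ //
    (∀ i, ∑ j, M i j = μ i) ∧ (∀ j, ∑ i, M i j = ν j)}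

/-!
A tuple `(A_i)` of disjoint sets covering `Fin n` is the tuple of fibres of a function
`Fin n → Fin m`, and the `A_i` are `π`-invariant exactly when the function is. Hence
`d_μ(π) d_ν(π)` counts the `π`-invariant functions `Fin n → Fin m × Fin l` whose fibre sizes form
a matrix with row sums `μ` and column sums `ν`. By Burnside's lemma the average over `π` is the
number of orbits of such functions under `S_n`, and an orbit is determined by its matrix of fibre
sizes.
-/

section Fibers

variable {α ι κ : Type*} [Fintype α] [DecidableEq ι] [DecidableEq κ]

/-- The fibres of `f : α → ι`, as a family of finite sets indexed by the whole codomain: values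
which `f` does not attain have an empty fibre. -/
def fibers (f : α → ι) (i : ι) : Finset α := {x | f x = i}

@[simp]
lemma mem_fibers {f : α → ι} {i : ι} {x : α} : x ∈ fibers f i ↔ f x = i := by
  simp [fibers]

lemma fibers_injective : Function.Injective (fibers : (α → ι) → ι → Finset α) := by
  intro f g hfg
  funext x
  have hx : x ∈ fibers g (f x) := hfg ▸ mem_fibers.2 rfl
  exact (mem_fibers.1 hx).symm

lemma mem_range_fibers_iff [DecidableEq α] [Fintype ι] {A : ι → Finset α} :
    A ∈ Set.range fibers ↔
      (∀ i j, i ≠ j → Disjoint (A i) (A j)) ∧ Finset.univ.biUnion A = Finset.univ := by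
  constructor
  · rintro ⟨f, rfl⟩
    refine ⟨fun i j hij => Finset.disjoint_left.2 fun x hi hj => ?_, by ext; simp⟩
    exact hij ((mem_fibers.1 hi).symm.trans (mem_fibers.1 hj))
  · rintro ⟨hdisj, hcover⟩
    have hmem : ∀ x, ∃ i, x ∈ A i := by simpa [Finset.ext_iff] using hcover
    choose f hf using hmem
    refine ⟨f, funext fun i => Finset.ext fun x => mem_fibers.trans ⟨?_, fun hx => ?_⟩⟩
    · rintro rfl
      exact hf x
    · by_contra hne
      exact Finset.disjoint_left.1 (hdisj _ _ hne) (hf x) hx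

lemma image_fibers_eq_iff [DecidableEq α] {f : α → ι} {σ : Equiv.Perm α} :
    (∀ i, (fibers f i).image σ = fibers f i) ↔ f ∘ σ = f := by
  constructor
  · intro h
    funext x
    have hx : σ x ∈ (fibers f (f x)).image σ := Finset.mem_image_of_mem σ (mem_fibers.2 rfl)
    rwa [h, mem_fibers] at hx
  · intro h i
    refine Finset.eq_of_subset_of_card_le (Finset.image_subset_iff.2 fun x hx => ?_)
      (Finset.card_image_of_injective _ σ.injective).ge
    exact mem_fibers.2 ((congrFun h x).trans (mem_fibers.1 hx))

/-- The number of elements of `α` which `f : α → ι` sends to each element of `ι`. -/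
def fiberCard (f : α → ι) (i : ι) : ℕ := (fibers f i).card

lemma fiberCard_eq_card_subtype (f : α → ι) (i : ι) :
    fiberCard f i = Fintype.card {x // f x = i} :=
  (Fintype.card_of_subtype _ fun _ => mem_fibers).symm

lemma fiberCard_eq_iff_exists_perm {f g : α → ι} :
    fiberCard f = fiberCard g ↔ ∃ σ : Equiv.Perm α, g ∘ σ = f := by
  simp only [funext_iff, fiberCard_eq_card_subtype, Function.comp_apply]
  constructor
  · intro h
    let e (i : ι) : {x // f x = i} ≃ {x // g x = i} := Fintype.equivOfCardEq (h i)
    exact ⟨(Equiv.sigmaFiberEquiv f).symm.trans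
      ((Equiv.sigmaCongrRight e).trans (Equiv.sigmaFiberEquiv g)), fun x => (e (f x) ⟨x, rfl⟩).2⟩
  · rintro ⟨σ, hσ⟩ i
    exact Fintype.card_congr (σ.subtypeEquiv fun x => by rw [hσ])

lemma fiberCard_fst_comp [Fintype κ] (f : α → ι × κ) (i : ι) :
    fiberCard (Prod.fst ∘ f) i = ∑ j, fiberCard f (i, j) := by
  simp only [fiberCard, fibers, Prod.ext_iff, ← Finset.filter_filter]
  exact Finset.card_eq_sum_card_fiberwise fun _ _ => Finset.mem_coe.2 (Finset.mem_univ _)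

lemma fiberCard_snd_comp [Fintype ι] (f : α → ι × κ) (j : κ) :
    fiberCard (Prod.snd ∘ f) j = ∑ i, fiberCard f (i, j) := by
  simp only [fiberCard, fibers, Prod.ext_iff, and_comm (a := (f _).1 = _),
    ← Finset.filter_filter]
  exact Finset.card_eq_sum_card_fiberwise fun _ _ => Finset.mem_coe.2 (Finset.mem_univ _)

lemma mem_range_fiberCard_iff [Fintype ι] {c : ι → ℕ} :
    c ∈ Set.range (fiberCard : (α → ι) → ι → ℕ) ↔ ∑ i, c i = Fintype.card α := by
  constructor
  · rintro ⟨f, rfl⟩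
    exact (Finset.card_eq_sum_card_fiberwise fun _ _ => Finset.mem_coe.2 (Finset.mem_univ _)).symm
  · intro hc
    let e : α ≃ Σ i, Fin (c i) := Fintype.equivOfCardEq (by simp [hc])
    refine ⟨fun x => (e x).1, funext fun i => ?_⟩
    have fiberEquiv : {x // (e x).1 = i} ≃ Fin (c i) :=
      (e.subtypeEquiv fun _ => Iff.rfl).trans (Equiv.sigmaSubtype i)
    rw [fiberCard_eq_card_subtype, Fintype.card_congr fiberEquiv, Fintype.card_fin]

end Fibers

section Orbits

open MulAction

variable {α ι : Type*} [Fintype α] [DecidableEq ι]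

/-- The functions `α → ι` whose fibre sizes lie in a prescribed set, with the permutations of `α`
acting by precomposition. -/
def functionsWithFiberCard (C : Set (ι → ℕ)) : SubMulAction (Equiv.Perm α)ᵈᵐᵃ (α → ι) where
  carrier := {f | fiberCard f ∈ C}
  smul_mem' σ f hf := by
    have hσ : fiberCard (σ • f) = fiberCard f :=
      fiberCard_eq_iff_exists_perm.2 ⟨DomMulAct.mk.symm σ, rfl⟩
    rwa [Set.mem_ofPred_eq, hσ]

lemma orbitRel_functionsWithFiberCard (C : Set (ι → ℕ)) :
    orbitRel (Equiv.Perm α)ᵈᵐᵃ (functionsWithFiberCard (α := α) C) =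
      Setoid.ker fun f => fiberCard f.1 := by
  ext f g
  rw [SubMulAction.orbitRel_of_subMul, Setoid.comap_rel, orbitRel_apply, Setoid.ker_def,
    fiberCard_eq_iff_exists_perm]
  exact DomMulAct.mk.symm.exists_congr fun _ => Iff.rfl

lemma card_orbits_functionsWithFiberCard [Fintype ι] (C : Set (ι → ℕ)) :
    Nat.card (orbitRel.Quotient (Equiv.Perm α)ᵈᵐᵃ (functionsWithFiberCard (α := α) C)) =
      Nat.card {c : ι → ℕ // c ∈ C ∧ ∑ i, c i = Fintype.card α} := by
  rw [orbitRel.Quotient, orbitRel_functionsWithFiberCard,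
    Nat.card_congr (Setoid.quotientKerEquivRange _)]
  refine Nat.card_congr (Equiv.subtypeEquivRight fun c => ?_)
  rw [← mem_range_fiberCard_iff]
  constructor
  · rintro ⟨f, rfl⟩
    exact ⟨f.2, f.1, rfl⟩
  · rintro ⟨hC, f, rfl⟩
    exact ⟨⟨f, hC⟩, rfl⟩

lemma card_fixedBy_functionsWithFiberCard (C : Set (ι → ℕ)) (σ : Equiv.Perm α) :
    Nat.card (fixedBy (functionsWithFiberCard (α := α) C) (DomMulAct.mk σ)) =
      Nat.card {f : α → ι // f ∘ σ = f ∧ fiberCard f ∈ C} :=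
  Nat.card_congr
    { toFun f := ⟨f.1.1, congrArg Subtype.val f.2, f.1.2⟩
      invFun f := ⟨⟨f.1, f.2.2⟩, Subtype.ext f.2.1⟩ }

theorem sum_card_invariant_functions [DecidableEq α] [Fintype ι] (C : Set (ι → ℕ)) :
    ∑ σ : Equiv.Perm α, Nat.card {f : α → ι // f ∘ σ = f ∧ fiberCard f ∈ C} =
      Nat.card {c : ι → ℕ // c ∈ C ∧ ∑ i, c i = Fintype.card α} *
        (Fintype.card α).factorial := by
  classical
  have : Fintype (Equiv.Perm α)ᵈᵐᵃ := .ofEquiv _ DomMulAct.mk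
  have := Fintype.ofFinite (functionsWithFiberCard (α := α) C)
  have card_group : Fintype.card (Equiv.Perm α)ᵈᵐᵃ = (Fintype.card α).factorial :=
    (Fintype.card_congr DomMulAct.mk.symm).trans Fintype.card_perm
  calc
    _ = ∑ σ : (Equiv.Perm α)ᵈᵐᵃ, Nat.card (fixedBy (functionsWithFiberCard (α := α) C) σ) :=
      Fintype.sum_equiv DomMulAct.mk _ _ fun σ => (card_fixedBy_functionsWithFiberCard C σ).symm
    _ = Nat.card (orbitRel.Quotient (Equiv.Perm α)ᵈᵐᵃ (functionsWithFiberCard (α := α) C)) *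
        Fintype.card (Equiv.Perm α)ᵈᵐᵃ := by
      simp only [Nat.card_eq_fintype_card, sum_card_fixedBy_eq_card_orbits_mul_card_group]
    _ = _ := by rw [card_orbits_functionsWithFiberCard, card_group]

end Orbits

section ContingencyTables

variable {α ι κ : Type*} [Fintype ι] [Fintype κ] {μ : ι → ℕ} {ν : κ → ℕ}

/-- The matrices of natural numbers with row sums `μ` and column sums `ν`, with uncurried indices
so that they can be compared with the fibre sizes of a function into `ι × κ`. -/
def contingencyTables (μ : ι → ℕ) (ν : κ → ℕ) : Set (ι × κ → ℕ) :=
  {c | (∀ i, ∑ j, c (i, j) = μ i) ∧ ∀ j, ∑ i, c (i, j) = ν j}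

lemma sum_eq_of_mem_contingencyTables {c : ι × κ → ℕ} (hc : c ∈ contingencyTables μ ν) :
    ∑ p, c p = ∑ i, μ i := by
  simp only [Fintype.sum_prod_type, hc.1]

lemma fiberCard_mem_contingencyTables_iff [Fintype α] [DecidableEq ι] [DecidableEq κ]
    {f : α → ι × κ} :
    fiberCard f ∈ contingencyTables μ ν ↔
      fiberCard (Prod.fst ∘ f) = μ ∧ fiberCard (Prod.snd ∘ f) = ν := by
  simp only [contingencyTables, Set.mem_ofPred_eq, funext_iff, fiberCard_fst_comp,
    fiberCard_snd_comp]

end ContingencyTables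

section Fin

variable {n m l : ℕ}

lemma Nmat_eq_card_contingencyTables (μ : Fin m → ℕ) (ν : Fin l → ℕ) :
    Nmat μ ν = Nat.card (contingencyTables μ ν) :=
  Nat.card_congr ((Equiv.curry _ _ _).symm.subtypeEquiv fun _ => Iff.rfl)

lemma dPart_eq_card_invariant_functions (μ : Fin m → ℕ) (π : Equiv.Perm (Fin n)) :
    dPart μ π = Nat.card {f : Fin n → Fin m // f ∘ π = f ∧ fiberCard f = μ} := by
  refine Eq.trans (Nat.card_congr (Equiv.subtypeEquivRight fun A => ?_))
    (Nat.card_image_of_injective fibers_injective {f | f ∘ π = f ∧ fiberCard f = μ})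
  rw [← and_assoc, ← mem_range_fibers_iff]
  constructor
  · rintro ⟨⟨f, rfl⟩, hcard, hinv⟩
    exact ⟨f, ⟨image_fibers_eq_iff.1 hinv, funext hcard⟩, rfl⟩
  · rintro ⟨f, ⟨hinv, hcard⟩, rfl⟩
    exact ⟨⟨f, rfl⟩, congrFun hcard, image_fibers_eq_iff.2 hinv⟩

lemma dPart_mul_dPart_eq_card_invariant_functions (μ : Fin m → ℕ) (ν : Fin l → ℕ)
    (π : Equiv.Perm (Fin n)) :
    dPart μ π * dPart ν π =
      Nat.card {f : Fin n → Fin m × Fin l //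
        f ∘ π = f ∧ fiberCard f ∈ contingencyTables μ ν} := by
  simp only [dPart_eq_card_invariant_functions, fiberCard_mem_contingencyTables_iff]
  rw [← Nat.card_prod]
  refine Nat.card_congr (Equiv.subtypeProdEquivProd.symm.trans
    ((Equiv.arrowProdEquivProdArrow _ _ _).symm.subtypeEquiv ?_))
  rintro ⟨f, g⟩
  have comp_eq_iff : (fun x => (f x, g x)) ∘ π = (fun x => (f x, g x)) ↔ f ∘ π = f ∧ g ∘ π = g := by
    simp only [funext_iff, Function.comp_apply, Prod.mk.injEq, forall_and]
  exact and_and_and_comm.trans (and_congr_left' comp_eq_iff.symm)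

end Fin

theorem average_dPart_mul_dPart_general {n m l : ℕ} {μ : Fin m → ℕ} (hμ : ∑ i, μ i = n)
    (ν : Fin l → ℕ) :
    (1 / (Nat.factorial n : ℚ)) *
      ∑ π : Equiv.Perm (Fin n), (dPart μ π : ℚ) * (dPart ν π : ℚ)
      = (Nmat μ ν : ℚ) := by
  have card_tables : Nat.card {c // c ∈ contingencyTables μ ν ∧ ∑ p, c p = n} = Nmat μ ν := by
    rw [Nmat_eq_card_contingencyTables]
    exact Nat.card_congr (Equiv.subtypeEquivRight fun c =>
      and_iff_left_of_imp fun hc => (sum_eq_of_mem_contingencyTables hc).trans hμ)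
  have sum_eq : ∑ π : Equiv.Perm (Fin n), dPart μ π * dPart ν π = Nmat μ ν * n.factorial := by
    simp only [dPart_mul_dPart_eq_card_invariant_functions, sum_card_invariant_functions,
      Fintype.card_fin, card_tables]
  have factorial_ne_zero : (n.factorial : ℚ) ≠ 0 := Nat.cast_ne_zero.2 n.factorial_ne_zero
  rw [one_div, inv_mul_eq_iff_eq_mul₀ factorial_ne_zero, mul_comm]
  exact_mod_cast sum_eq

/-- For partitions `μ, ν ⊢ n`, the average of `d_μ(π) d_ν(π)` over `S_n`
equals the number of non-negative integer matrices with row sums `μ` and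
column sums `ν`. -/
theorem average_dPart_mul_dPart (n : ℕ) (hn : 1 ≤ n) (m l : ℕ)
    (μ : Fin m → ℕ) (ν : Fin l → ℕ)
    (hμa : Antitone μ) (hμp : ∀ i, 0 < μ i) (hμs : ∑ i, μ i = n)
    (hνa : Antitone ν) (hνp : ∀ j, 0 < ν j) (hνs : ∑ j, ν j = n) :
    (1 / (Nat.factorial n : ℚ)) *
      ∑ π : Equiv.Perm (Fin n), (dPart μ π : ℚ) * (dPart ν π : ℚ)
      = (Nmat μ ν : ℚ) :=
  average_dPart_mul_dPart_general hμs ν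
end

section
/- For every m ≥ 1 and every number of variables N ≥ 1, one has Σ_{π ∈ S_m} p_{λ(π)} = m! · h_m, as an identity of symmetric polynomials in N variables with rational coefficients. -/
/-- `pPerm N π = p_{λ(π)}`, the product of the power sum polynomials `p_k` in `N`
variables over the cycle lengths `k` (including fixed points) of the permutation `π`. -/
noncomputable def pPerm (N : ℕ) {m : ℕ} (π : Equiv.Perm (Fin m)) :
    MvPolynomial (Fin N) ℚ :=
  ((Equiv.Perm.partition π).parts.map (fun k => MvPolynomial.psum (Fin N) ℚ k)).prod

/-!
Expanding the product over the cycles of `π` of `p_k = ∑ i, x_i ^ k` amounts to choosing one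
variable for each cycle, so `p_{λ(π)}` is the sum of the monomials `∏ a, x_{f a}` over the
functions `f` with `f ∘ π = f`. Summing over all `π`, Burnside's lemma, weighted by these monomials,
counts each orbit of functions under precomposition with permutations exactly `m!` times, and the
orbits are the multisets of `m` variables, which index the monomials of `h_m`.
-/

open Equiv MulAction MvPolynomial Finset

section Burnside

variable {G X M : Type*} [Group G] [MulAction G X]

lemma fst_sigmaFixedByEquivOrbitsProdGroup (p : Σ g : G, fixedBy X g) :
    (sigmaFixedByEquivOrbitsProdGroup G X p).1 = Quotient.mk (orbitRel G X) p.2 :=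
  rfl

theorem sum_sum_fixedBy_eq_card_nsmul_sum_orbits [Fintype G] [∀ g : G, Fintype (fixedBy X g)]
    [Fintype (orbitRel.Quotient G X)] [AddCommMonoid M] (w : orbitRel.Quotient G X → M) :
    ∑ g : G, ∑ x : fixedBy X g, w (Quotient.mk (orbitRel G X) x) =
      Fintype.card G • ∑ ω, w ω := by
  rw [← Fintype.sum_sigma', Finset.smul_sum]
  calc ∑ p : Σ g : G, fixedBy X g, w (Quotient.mk (orbitRel G X) p.2)
      = ∑ q : orbitRel.Quotient G X × G, w q.1 :=
        Fintype.sum_equiv (sigmaFixedByEquivOrbitsProdGroup G X) _ _ fun p ↦ by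
          rw [fst_sigmaFixedByEquivOrbitsProdGroup]
    _ = ∑ ω, Fintype.card G • w ω := by
        simp only [Fintype.sum_prod_type, sum_const, card_univ]

end Burnside

section Values

variable {α β : Type*} [Fintype α]

/-- The multiset of values of `f`, with multiplicity, as an element of the symmetric power. It is a
complete invariant of `f` up to precomposition with a permutation. -/
def valuesSym (f : α → β) : Sym β (Fintype.card α) :=
  ⟨univ.val.map f, by simp⟩

lemma valuesSym_surjective :
    Function.Surjective (valuesSym : (α → β) → Sym β (Fintype.card α)) := by
  rintro ⟨⟨l⟩, hl⟩
  let e : α ≃ Fin l.length := (Fintype.equivFin α).trans (finCongr hl.symm)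
  refine ⟨l.get ∘ e, Sym.ext ?_⟩
  calc univ.val.map (l.get ∘ e)
      = (univ.map e.toEmbedding).val.map l.get := (Multiset.map_map _ _ _).symm
    _ = l := by simp

lemma valuesSym_comp_perm (f : α → β) (τ : Perm α) : valuesSym (f ∘ τ) = valuesSym f := by
  refine Sym.ext ?_
  calc univ.val.map (f ∘ τ)
      = (univ.map τ.toEmbedding).val.map f := (Multiset.map_map _ _ _).symm
    _ = univ.val.map f := by rw [map_univ_equiv]

lemma card_fiber_eq_of_valuesSym_eq [DecidableEq β] {f g : α → β} (h : valuesSym f = valuesSym g)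
    (b : β) :
    Fintype.card {a // f a = b} = Fintype.card {a // g a = b} := by
  have hcount := congrArg (fun s : Sym β _ ↦ Multiset.count b s.1) h
  simpa only [valuesSym, Multiset.count_map, Fintype.card_subtype, card_def, filter_val,
    eq_comm (a := b)] using hcount

lemma exists_comp_perm_eq_of_valuesSym_eq {f g : α → β} (h : valuesSym f = valuesSym g) :
    ∃ τ : Perm α, g ∘ τ = f := by
  classical
  let e (b : β) := Fintype.equivOfCardEq (card_fiber_eq_of_valuesSym_eq h b)
  refine ⟨(sigmaFiberEquiv f).symm.trans ((sigmaCongrRight e).trans (sigmaFiberEquiv g)), ?_⟩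
  ext a
  exact (e (f a) ⟨a, rfl⟩).2

lemma orbitRel_domMulAct_perm_iff_valuesSym_eq {f g : α → β} :
    orbitRel (Perm α)ᵈᵐᵃ (α → β) f g ↔ valuesSym f = valuesSym g := by
  constructor
  · rintro ⟨τ, rfl⟩
    exact valuesSym_comp_perm g (DomMulAct.mk.symm τ)
  · intro h
    obtain ⟨τ, hτ⟩ := exists_comp_perm_eq_of_valuesSym_eq h
    exact ⟨DomMulAct.mk τ, hτ⟩

/-- The orbits of functions `α → β` under precomposition with permutations of `α`, identified with
the multisets of their values. -/
noncomputable def orbitsEquivSym :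
    orbitRel.Quotient (Perm α)ᵈᵐᵃ (α → β) ≃ Sym β (Fintype.card α) :=
  (Quotient.congrRight fun _ _ ↦ orbitRel_domMulAct_perm_iff_valuesSym_eq).trans
    (Setoid.quotientKerEquivOfSurjective valuesSym valuesSym_surjective)

lemma orbitsEquivSym_mk (f : α → β) :
    orbitsEquivSym (Quotient.mk (orbitRel (Perm α)ᵈᵐᵃ (α → β)) f) = valuesSym f :=
  rfl

end Values

section Cycles

variable {α β : Type*}

/-- The cycles of `π`, as classes of `SameCycle`. Unlike in `Equiv.Perm.cycleFactorsFinset`, each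
fixed point counts as a cycle, so that the lengths are the parts of `Equiv.Perm.partition π`. -/
abbrev PermCycles (π : Perm α) : Type _ :=
  Quotient (Perm.SameCycle.setoid π)

lemma mem_fixedBy_mk_iff_sameCycle_le_ker (π : Perm α) (f : α → β) :
    f ∈ fixedBy (α → β) (DomMulAct.mk π) ↔ Perm.SameCycle.setoid π ≤ Setoid.ker f := by
  constructor
  · rintro hf a _ ⟨n, rfl⟩
    exact (congrFun (mem_fixedBy_zpow hf n) a).symm
  · intro hf
    ext a
    exact hf (Perm.sameCycle_apply_left.2 (Perm.SameCycle.refl π a))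

/-- Functions invariant under precomposition with `π`, viewed as functions on the cycles of `π`. The
invariance is expressed by the action of `(Perm α)ᵈᵐᵃ`, for which `mk π • f = f ∘ π`. -/
def fixedByEquivCyclesFun (π : Perm α) :
    fixedBy (α → β) (DomMulAct.mk π) ≃ (PermCycles π → β) :=
  (subtypeEquivRight (mem_fixedBy_mk_iff_sameCycle_le_ker π)).trans (Setoid.liftEquiv _)

variable [Fintype α] [DecidableEq α]

instance decidableRelSameCycleSetoid (π : Perm α) : DecidableRel (Perm.SameCycle.setoid π) :=
  inferInstanceAs (DecidableRel π.SameCycle)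

/-- The finset of points lying on a given cycle; its cardinality is the length of the cycle. -/
def cyclePoints {π : Perm α} (c : PermCycles π) : Finset α :=
  {a | Quotient.mk _ a = c}

lemma mem_cyclePoints_mk {π : Perm α} {a b : α} :
    b ∈ cyclePoints (Quotient.mk (Perm.SameCycle.setoid π) a) ↔ π.SameCycle a b := by
  rw [cyclePoints, mem_filter_univ, Quotient.eq]
  exact Perm.sameCycle_comm

lemma cyclePoints_injective (π : Perm α) :
    Function.Injective (cyclePoints : PermCycles π → Finset α) := by
  intro c d hcd
  induction c using Quotient.inductionOn with
  | h a =>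
    have ha : a ∈ cyclePoints d := hcd ▸ mem_cyclePoints_mk.2 (.refl π a)
    exact (mem_filter_univ a).1 ha

lemma cyclePoints_mk_of_mem_support {π : Perm α} {a : α} (ha : a ∈ π.support) :
    cyclePoints (Quotient.mk (Perm.SameCycle.setoid π) a) = (π.cycleOf a).support := by
  ext b
  rw [mem_cyclePoints_mk, Perm.mem_support_cycleOf_iff, and_iff_left ha]

lemma cyclePoints_mk_of_notMem_support {π : Perm α} {a : α} (ha : a ∉ π.support) :
    cyclePoints (Quotient.mk (Perm.SameCycle.setoid π) a) = {a} := by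
  ext b
  rw [mem_cyclePoints_mk, mem_singleton]
  exact ⟨fun h ↦ (h.eq_of_left (Perm.notMem_support.1 ha)).symm, fun h ↦ h ▸ .refl π b⟩

lemma image_cycleOf_support (π : Perm α) : π.support.image π.cycleOf = π.cycleFactorsFinset := by
  ext c
  rw [mem_image]
  constructor
  · rintro ⟨a, ha, rfl⟩
    exact Perm.cycleOf_mem_cycleFactorsFinset_iff.2 ha
  · intro hc
    obtain ⟨a, ha⟩ := (Perm.mem_cycleFactorsFinset_iff.1 hc).1.nonempty_support
    exact ⟨a, Perm.mem_cycleFactorsFinset_support_le hc ha, (Perm.cycle_is_cycleOf ha hc).symm⟩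

lemma image_cyclePoints_univ (π : Perm α) :
    univ.image (cyclePoints : PermCycles π → Finset α) =
      π.cycleFactorsFinset.image Perm.support ∪ π.supportᶜ.image singleton := by
  rw [← image_univ_of_surjective Quotient.mk_surjective, image_image, ← union_compl π.support,
    image_union, ← image_cycleOf_support, image_image]
  congr 1
  · exact image_congr fun a ha ↦ cyclePoints_mk_of_mem_support ha
  · exact image_congr fun a ha ↦ cyclePoints_mk_of_notMem_support (mem_compl.1 ha)

lemma support_injOn_cycleFactorsFinset (π : Perm α) :
    Set.InjOn Perm.support (π.cycleFactorsFinset : Set (Perm α)) := by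
  intro c hc d hd hcd
  obtain ⟨a, ha⟩ := (Perm.mem_cycleFactorsFinset_iff.1 hc).1.nonempty_support
  rw [Perm.cycle_is_cycleOf ha hc, Perm.cycle_is_cycleOf (hcd ▸ ha) hd]

lemma disjoint_image_support_image_singleton (π : Perm α) :
    Disjoint (π.cycleFactorsFinset.image Perm.support) (π.supportᶜ.image singleton) := by
  simp only [Finset.disjoint_left, mem_image]
  rintro _ ⟨c, hc, rfl⟩ ⟨a, ha, hac⟩
  exact mem_compl.1 ha (Perm.mem_cycleFactorsFinset_support_le hc (hac ▸ mem_singleton_self a))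

theorem parts_partition_eq_map_card_cyclePoints (π : Perm α) :
    π.partition.parts = univ.val.map fun c : PermCycles π ↦ #(cyclePoints c) := by
  calc π.partition.parts
      = (π.cycleFactorsFinset.image Perm.support).val.map card +
          (π.supportᶜ.image singleton).val.map card := by
        rw [image_val_of_injOn (support_injOn_cycleFactorsFinset π),
          image_val_of_injOn (singleton_injective.injOn), Perm.parts_partition, Perm.cycleType_def]
        simp [card_compl]
    _ = (univ.image (cyclePoints : PermCycles π → Finset α)).val.map card := by
        rw [image_cyclePoints_univ, ← disjUnion_eq_union _ _
          (disjoint_image_support_image_singleton π), disjUnion_val, Multiset.map_add]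
    _ = univ.val.map fun c : PermCycles π ↦ #(cyclePoints c) := by
        rw [image_val_of_injOn (cyclePoints_injective π).injOn, Multiset.map_map]
        rfl

end Cycles

lemma prod_sum_pow_card_fiber {α ι Q R : Type*} [Fintype α] [Fintype ι] [Fintype Q] [DecidableEq Q]
    [CommSemiring R] (q : α → Q) (x : ι → R) :
    ∏ c, ∑ i, x i ^ #{a | q a = c} = ∑ g : Q → ι, ∏ a, x (g (q a)) := by
  classical
  simp only [Fintype.prod_sum, ← prod_const, prod_fiberwise']

section Symmetric

variable {α : Type*} (σ R : Type*) [Fintype α] [DecidableEq α] [Fintype σ] [DecidableEq σ]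
  [CommSemiring R]

theorem psumPart_partition_eq_sum_fixedBy (π : Perm α) :
    psumPart σ R π.partition =
      ∑ f : fixedBy (α → σ) (DomMulAct.mk π), ∏ a, (X (f.1 a) : MvPolynomial σ R) := by
  calc psumPart σ R π.partition
      = ∏ c : PermCycles π, ∑ i, X i ^ #(cyclePoints c) := by
        rw [psumPart, parts_partition_eq_map_card_cyclePoints, Multiset.map_map]
        rfl
    _ = ∑ g : PermCycles π → σ, ∏ a, X (g (Quotient.mk _ a)) := prod_sum_pow_card_fiber _ X
    _ = ∑ f : fixedBy (α → σ) (DomMulAct.mk π), ∏ a, X (f.1 a) :=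
        ((fixedByEquivCyclesFun π).sum_comp _).symm

variable (α) in
theorem sum_psum_eq_factorial_hsymm_general :
    ∑ π : Perm α, psumPart σ R π.partition =
      (Fintype.card α).factorial • hsymm σ R (Fintype.card α) := by
  let monomialOf (s : Sym σ (Fintype.card α)) : MvPolynomial σ R := (s.1.map X).prod
  let _ : Fintype (Perm α)ᵈᵐᵃ := Fintype.ofEquiv _ DomMulAct.mk
  let _ : Fintype (orbitRel.Quotient (Perm α)ᵈᵐᵃ (α → σ)) := Fintype.ofEquiv _ orbitsEquivSym.symm
  let orbitMonomial (ω : orbitRel.Quotient (Perm α)ᵈᵐᵃ (α → σ)) : MvPolynomial σ R :=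
    monomialOf (orbitsEquivSym ω)
  calc ∑ π : Perm α, psumPart σ R π.partition
      = ∑ π : Perm α, ∑ f : fixedBy (α → σ) (DomMulAct.mk π),
          orbitMonomial (Quotient.mk _ f.1) := by
        simp [psumPart_partition_eq_sum_fixedBy, orbitMonomial, orbitsEquivSym_mk, monomialOf,
          valuesSym]
    _ = ∑ g : (Perm α)ᵈᵐᵃ, ∑ f : fixedBy (α → σ) g, orbitMonomial (Quotient.mk _ f.1) :=
        DomMulAct.mk.sum_comp fun g ↦ ∑ f : fixedBy (α → σ) g, orbitMonomial (Quotient.mk _ f.1)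
    _ = Fintype.card (Perm α)ᵈᵐᵃ • ∑ ω, orbitMonomial ω :=
        sum_sum_fixedBy_eq_card_nsmul_sum_orbits orbitMonomial
    _ = (Fintype.card α).factorial • hsymm σ R (Fintype.card α) := by
        rw [orbitsEquivSym.sum_comp monomialOf, ← Fintype.card_congr DomMulAct.mk,
          Fintype.card_perm]
        rfl

end Symmetric

/-- Newton–Girard: `∑_{π ∈ S_m} p_{λ(π)} = m! h_m` as symmetric polynomials
in `N` variables over `ℚ`, where `h_m` is the complete homogeneous symmetric
polynomial of degree `m`. -/
theorem sum_psum_eq_factorial_hsymm (m : ℕ) (hm : 1 ≤ m) (N : ℕ) (hN : 1 ≤ N) :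
    ∑ π : Equiv.Perm (Fin m), pPerm N π
      = (Nat.factorial m : ℚ) • MvPolynomial.hsymm (Fin N) ℚ m := by
  rw [Nat.cast_smul_eq_nsmul]
  simpa [pPerm, psumPart] using sum_psum_eq_factorial_hsymm_general (Fin m) (Fin N) ℚ
end

section
/- Let n ≥ 1 and let μ, μ̃ be partitions of n. Then Σ_{λ ⊢ n} K_{λ,μ} · K_{λ,μ̃} = N_{μ,μ̃}, where the sum is over all partitions λ of n. Equivalently, the number of pairs (P, Q) of semistandard Young tableaux having the same shape (a partition of n), where P has content μ and Q has content μ̃, equals N_{μ,μ̃}. -/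
/-- `HasContent T μ` means the semistandard Young tableau `T` has content `μ`:
for each `i`, the entry `i` appears exactly `μ i` times (entries indexed from `0`). -/
def HasContent {lam : YoungDiagram} (T : SemistandardYoungTableau lam)
    {m : ℕ} (μ : Fin m → ℕ) : Prop :=
  ∀ i : Fin m, (lam.cells.filter fun c => T c.1 c.2 = (i : ℕ)).card = μ i

/-!
The cells of a semistandard tableau that carry its largest letter form a horizontal strip, so a
tableau is a chain of shapes linked by horizontal strips whose sizes are its content. Given shapes
`α` and `β`, Fomin's local rule matches the shapes `lam` for which `lam / α` and `lam / β` are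
horizontal strips with `a` and `b` cells with the pairs `(k, ρ)` for which `α / ρ` and `β / ρ` are
horizontal strips with `b - k` and `a - k` cells. Applied along the chain of `Q`, it trades the
strip of the largest letter of `P` for a sequence of numbers `k`, the last row of the matrix, and
shrinks `Q` to the shape that remains of `P`. Induction on the number of letters of `P` produces
the other rows; this is the growth-diagram form of the Robinson–Schensted–Knuth correspondence.
-/

namespace RSK

section RowLengths

variable {ρ lam : YoungDiagram}

theorem ext_rowLen (h : ∀ i, ρ.rowLen i = lam.rowLen i) : ρ = lam :=
  SetLike.ext fun ⟨i, j⟩ => by simp only [YoungDiagram.mem_iff_lt_rowLen, h]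

theorem rowLen_eq_zero_of_colLen_le {i : ℕ} (h : lam.colLen 0 ≤ i) : lam.rowLen i = 0 := by
  by_contra hpos
  have hmem : (i, 0) ∈ lam := YoungDiagram.mem_iff_lt_rowLen.2 (Nat.pos_of_ne_zero hpos)
  exact absurd (YoungDiagram.mem_iff_lt_colLen.1 hmem) h.not_gt

theorem card_eq_sum_rowLen {N : ℕ} (h : lam.colLen 0 ≤ N) :
    lam.card = ∑ i ∈ Finset.range N, lam.rowLen i := by
  have row_lt : ∀ c ∈ lam.cells, c.1 ∈ Finset.range N := fun c hc => by
    have hmem : (c.1, 0) ∈ lam := lam.up_left_mem le_rfl (Nat.zero_le c.2) ((lam.mem_cells c).1 hc)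
    exact Finset.mem_range.2 ((YoungDiagram.mem_iff_lt_colLen.1 hmem).trans_le h)
  rw [YoungDiagram.card, Finset.card_eq_sum_card_fiberwise row_lt]
  exact Finset.sum_congr rfl fun i _ => lam.rowLen_eq_card.symm

/-- The Young diagram whose `i`-th row has length `f i`. -/
def ofRowLenFun (f : ℕ → ℕ) (hf : Antitone f) (hf₀ : ∃ N, f N = 0) : YoungDiagram :=
  YoungDiagram.ofRowLens ((List.range (Nat.find hf₀)).map f)
    (List.Pairwise.map (S := (· ≥ ·)) f (fun _ _ h => hf h) List.pairwise_le_range).sortedGE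

theorem rowLen_ofRowLenFun {f : ℕ → ℕ} (hf : Antitone f) (hf₀ : ∃ N, f N = 0) (i : ℕ) :
    (ofRowLenFun f hf hf₀).rowLen i = f i := by
  have mem_iff : ∀ j, (i, j) ∈ ofRowLenFun f hf hf₀ ↔ j < f i := fun j => by
    suffices j < f i → i < Nat.find hf₀ by
      simpa [ofRowLenFun, YoungDiagram.mem_ofRowLens] using this
    intro hj
    by_contra! hi
    have := (hf hi).trans_eq (Nat.find_spec hf₀)
    omega
  exact eq_of_forall_lt_iff fun j => YoungDiagram.mem_iff_lt_rowLen.symm.trans (mem_iff j)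

end RowLengths

section HorizontalStrips

variable {ρ α β lam : YoungDiagram} {k : ℕ}

/-- The skew shape `lam / ρ` is a horizontal strip: it has at most one cell in each column. -/
structure IsHorizontalStrip (ρ lam : YoungDiagram) : Prop where
  le : ρ ≤ lam
  mem_of_succ_mem : ∀ {i j}, (i + 1, j) ∈ lam → (i, j) ∈ ρ

theorem isHorizontalStrip_iff_rowLen :
    IsHorizontalStrip ρ lam ↔
      ∀ i, ρ.rowLen i ≤ lam.rowLen i ∧ lam.rowLen (i + 1) ≤ ρ.rowLen i := by
  simp only [← forall_lt_iff_le, ← YoungDiagram.mem_iff_lt_rowLen]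
  exact ⟨fun h i => ⟨fun _ hj => h.le hj, fun _ hj => h.mem_of_succ_mem hj⟩,
    fun h => ⟨fun c hc => (h c.1).1 hc, fun hj => (h _).2 hj⟩⟩

/-- The skew shape `lam / ρ` is a horizontal strip with `a` cells. -/
structure IsHorizontalStripOfCard (a : ℕ) (ρ lam : YoungDiagram) : Prop
    extends IsHorizontalStrip ρ lam where
  card_eq : lam.card = ρ.card + a

theorem isHorizontalStripOfCard_zero (lam : YoungDiagram) : IsHorizontalStripOfCard 0 lam lam where
  le := le_rfl
  mem_of_succ_mem h := lam.up_left_mem (Nat.le_succ _) le_rfl h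
  card_eq := rfl

/-- The shapes obtained from `lam` by removing a horizontal strip with `a` cells. -/
abbrev StripRemoval (a : ℕ) (lam : YoungDiagram) : Type :=
  {ρ // IsHorizontalStripOfCard a ρ lam}

/-- The shapes obtained from `α` by adding a horizontal strip with `a` cells. -/
abbrev StripExtension (a : ℕ) (α : YoungDiagram) : Type :=
  {lam // IsHorizontalStripOfCard a α lam}

/-- Fomin's local rule for one square of a growth diagram, with `ρ` and `lam` in opposite corners,
`α` and `β` in the other two, and the matrix entry `k` in the square. Reading partitions as
row-length sequences, `ρ i` and `lam (i + 1)` are exchanged by reflecting the interval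
`[max (α (i + 1)) (β (i + 1)), min (α i) (β i)]`, in which both of them have to lie. -/
structure IsGrowthSquare (α β ρ lam : YoungDiagram) (k : ℕ) : Prop where
  rowLen_zero : lam.rowLen 0 = max (α.rowLen 0) (β.rowLen 0) + k
  rowLen_succ_add : ∀ i, lam.rowLen (i + 1) + ρ.rowLen i =
    min (α.rowLen i) (β.rowLen i) + max (α.rowLen (i + 1)) (β.rowLen (i + 1))

namespace IsGrowthSquare

theorem isHorizontalStrip_iff (h : IsGrowthSquare α β ρ lam k) :
    IsHorizontalStrip α lam ∧ IsHorizontalStrip β lam ↔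
      IsHorizontalStrip ρ α ∧ IsHorizontalStrip ρ β := by
  simp only [isHorizontalStrip_iff_rowLen, ← forall_and]
  have h₀ := h.rowLen_zero
  constructor <;> intro hs i
  · have := h.rowLen_succ_add i
    have := hs i
    have := hs (i + 1)
    omega
  · have := h.rowLen_succ_add i
    have := hs i
    cases i with
    | zero => omega
    | succ i =>
      have := h.rowLen_succ_add i
      have := hs i
      omega

theorem card_add_card (h : IsGrowthSquare α β ρ lam k) :
    lam.card + ρ.card = α.card + β.card + k := by
  obtain ⟨N, hα, hβ, hρ, hlam⟩ : ∃ N, α.colLen 0 ≤ N ∧ β.colLen 0 ≤ N ∧ ρ.colLen 0 ≤ N ∧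
      lam.colLen 0 ≤ N + 1 :=
    ⟨α.colLen 0 + β.colLen 0 + ρ.colLen 0 + lam.colLen 0, by omega, by omega, by omega, by omega⟩
  have sum_max_succ : ∑ i ∈ Finset.range N, max (α.rowLen (i + 1)) (β.rowLen (i + 1)) +
      max (α.rowLen 0) (β.rowLen 0) = ∑ i ∈ Finset.range N, max (α.rowLen i) (β.rowLen i) := by
    rw [← Finset.sum_range_succ' (fun i => max (α.rowLen i) (β.rowLen i)), Finset.sum_range_succ,
      rowLen_eq_zero_of_colLen_le hα, rowLen_eq_zero_of_colLen_le hβ, max_self, add_zero]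
  calc lam.card + ρ.card
      = ∑ i ∈ Finset.range N, (lam.rowLen (i + 1) + ρ.rowLen i) + lam.rowLen 0 := by
        rw [card_eq_sum_rowLen hlam, card_eq_sum_rowLen hρ, Finset.sum_range_succ',
          Finset.sum_add_distrib, add_right_comm]
    _ = ∑ i ∈ Finset.range N, min (α.rowLen i) (β.rowLen i) +
          ∑ i ∈ Finset.range N, max (α.rowLen i) (β.rowLen i) + k := by
        simp only [h.rowLen_succ_add, h.rowLen_zero, Finset.sum_add_distrib, ← sum_max_succ,
          add_assoc]
    _ = α.card + β.card + k := by
        rw [card_eq_sum_rowLen hα, card_eq_sum_rowLen hβ, ← Finset.sum_add_distrib,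
          ← Finset.sum_add_distrib]
        simp only [min_add_max]

theorem isHorizontalStripOfCard_iff {a b : ℕ} (h : IsGrowthSquare α β ρ lam k) :
    IsHorizontalStripOfCard a α lam ∧ IsHorizontalStripOfCard b β lam ↔
      (k ≤ a ∧ k ≤ b) ∧
        IsHorizontalStripOfCard (b - k) ρ α ∧ IsHorizontalStripOfCard (a - k) ρ β := by
  have card_add_card := h.card_add_card
  constructor
  · rintro ⟨⟨hα, card_α⟩, ⟨hβ, card_β⟩⟩
    obtain ⟨hρα, hρβ⟩ := h.isHorizontalStrip_iff.1 ⟨hα, hβ⟩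
    have card_le_α : ρ.card ≤ α.card := Finset.card_le_card hρα.le
    have card_le_β : ρ.card ≤ β.card := Finset.card_le_card hρβ.le
    exact ⟨⟨by omega, by omega⟩, ⟨hρα, by omega⟩, ⟨hρβ, by omega⟩⟩
  · rintro ⟨⟨hka, hkb⟩, ⟨hρα, card_α⟩, ⟨hρβ, card_β⟩⟩
    obtain ⟨hα, hβ⟩ := h.isHorizontalStrip_iff.2 ⟨hρα, hρβ⟩
    exact ⟨⟨hα, by omega⟩, ⟨hβ, by omega⟩⟩

theorem upper_unique {lam' : YoungDiagram} (h : IsGrowthSquare α β ρ lam k)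
    (h' : IsGrowthSquare α β ρ lam' k) : lam = lam' :=
  ext_rowLen fun
    | 0 => h.rowLen_zero.trans h'.rowLen_zero.symm
    | i + 1 => by have := h.rowLen_succ_add i; have := h'.rowLen_succ_add i; omega

theorem entry_unique {ρ' : YoungDiagram} {k' : ℕ} (h : IsGrowthSquare α β ρ lam k)
    (h' : IsGrowthSquare α β ρ' lam k') : k = k' := by
  have := h.rowLen_zero
  have := h'.rowLen_zero
  omega

theorem lower_unique {ρ' : YoungDiagram} {k' : ℕ} (h : IsGrowthSquare α β ρ lam k)
    (h' : IsGrowthSquare α β ρ' lam k') : ρ = ρ' :=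
  ext_rowLen fun i => by have := h.rowLen_succ_add i; have := h'.rowLen_succ_add i; omega

end IsGrowthSquare

/-- The corner `ρ` of a growth square with given `α`, `β` and `lam`. -/
def lowerCorner (hα : IsHorizontalStrip α lam) (hβ : IsHorizontalStrip β lam) : YoungDiagram :=
  ofRowLenFun (fun i => min (α.rowLen i) (β.rowLen i) +
      max (α.rowLen (i + 1)) (β.rowLen (i + 1)) - lam.rowLen (i + 1))
    (antitone_nat_of_succ_le fun i => by
      rw [isHorizontalStrip_iff_rowLen] at hα hβ
      grind)
    ⟨α.colLen 0, by
      rw [isHorizontalStrip_iff_rowLen] at hα hβ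
      have := rowLen_eq_zero_of_colLen_le (le_refl (α.colLen 0))
      grind⟩

theorem isGrowthSquare_lowerCorner (hα : IsHorizontalStrip α lam) (hβ : IsHorizontalStrip β lam) :
    IsGrowthSquare α β (lowerCorner hα hβ) lam
      (lam.rowLen 0 - max (α.rowLen 0) (β.rowLen 0)) where
  rowLen_zero := by
    have := isHorizontalStrip_iff_rowLen.1 hα 0
    have := isHorizontalStrip_iff_rowLen.1 hβ 0
    omega
  rowLen_succ_add i := by
    rw [lowerCorner, rowLen_ofRowLenFun]
    have := isHorizontalStrip_iff_rowLen.1 hα i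
    have := isHorizontalStrip_iff_rowLen.1 hβ i
    omega

/-- The corner `lam` of a growth square with given `α`, `β`, `ρ` and entry `k`. -/
def upperCorner (hα : IsHorizontalStrip ρ α) (hβ : IsHorizontalStrip ρ β) (k : ℕ) : YoungDiagram :=
  ofRowLenFun
    (fun
      | 0 => max (α.rowLen 0) (β.rowLen 0) + k
      | i + 1 => min (α.rowLen i) (β.rowLen i) +
          max (α.rowLen (i + 1)) (β.rowLen (i + 1)) - ρ.rowLen i)
    (antitone_nat_of_succ_le fun i => by
      rw [isHorizontalStrip_iff_rowLen] at hα hβ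
      cases i <;> grind)
    ⟨α.colLen 0 + β.colLen 0 + 1, by
      have : α.rowLen (α.colLen 0 + β.colLen 0) = 0 := rowLen_eq_zero_of_colLen_le (by omega)
      have : β.rowLen (α.colLen 0 + β.colLen 0 + 1) = 0 := rowLen_eq_zero_of_colLen_le (by omega)
      have := α.rowLen_anti _ _ (Nat.le_succ (α.colLen 0 + β.colLen 0))
      grind⟩

theorem isGrowthSquare_upperCorner (hα : IsHorizontalStrip ρ α) (hβ : IsHorizontalStrip ρ β)
    (k : ℕ) : IsGrowthSquare α β ρ (upperCorner hα hβ k) k where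
  rowLen_zero := by rw [upperCorner, rowLen_ofRowLenFun]
  rowLen_succ_add i := by
    rw [upperCorner, rowLen_ofRowLenFun]
    dsimp only
    have := isHorizontalStrip_iff_rowLen.1 hα i
    have := isHorizontalStrip_iff_rowLen.1 hβ i
    omega

/-- The growth square as a bijection between its upper corners and its lower corners with entry. -/
def localRuleEquiv (α β : YoungDiagram) (a b : ℕ) :
    {lam // IsHorizontalStripOfCard a α lam ∧ IsHorizontalStripOfCard b β lam} ≃
      {p : ℕ × YoungDiagram // (p.1 ≤ a ∧ p.1 ≤ b) ∧
        IsHorizontalStripOfCard (b - p.1) p.2 α ∧ IsHorizontalStripOfCard (a - p.1) p.2 β} where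
  toFun lam := ⟨(_, lowerCorner lam.2.1.1 lam.2.2.1),
    (isGrowthSquare_lowerCorner lam.2.1.1 lam.2.2.1).isHorizontalStripOfCard_iff.1 lam.2⟩
  invFun p := ⟨upperCorner p.2.2.1.1 p.2.2.2.1 p.1.1,
    (isGrowthSquare_upperCorner p.2.2.1.1 p.2.2.2.1 p.1.1).isHorizontalStripOfCard_iff.2 p.2⟩
  left_inv lam :=
    have lower := isGrowthSquare_lowerCorner lam.2.1.1 lam.2.2.1
    have strips := lower.isHorizontalStripOfCard_iff.1 lam.2
    Subtype.ext <| (isGrowthSquare_upperCorner strips.2.1.1 strips.2.2.1 _).upper_unique lower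
  right_inv p :=
    have upper := isGrowthSquare_upperCorner p.2.2.1.1 p.2.2.2.1 p.1.1
    have strips := upper.isHorizontalStripOfCard_iff.2 p.2
    have lower := isGrowthSquare_lowerCorner strips.1.1 strips.2.1
    Subtype.ext <| Prod.ext (lower.entry_unique upper) (lower.lower_unique upper)

end HorizontalStrips

section Tableaux

variable {ρ lam : YoungDiagram} {m : ℕ}

theorem card_filter_lt_eq_sum {T : SemistandardYoungTableau lam} {μ : Fin m → ℕ}
    (hT : HasContent T μ) : (lam.cells.filter fun c => T c.1 c.2 < m).card = ∑ i, μ i := by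
  have entry_mem_range : ∀ c ∈ lam.cells.filter fun c => T c.1 c.2 < m,
      T c.1 c.2 ∈ Finset.range m := fun c hc => Finset.mem_range.2 (Finset.mem_filter.1 hc).2
  rw [Finset.card_eq_sum_card_fiberwise entry_mem_range, ← Fin.sum_univ_eq_sum_range]
  refine Finset.sum_congr rfl fun i _ => ?_
  rw [← hT i, Finset.filter_filter]
  congr! 3 with c
  exact and_iff_right_of_imp fun h => h.trans_lt i.2

/-- The semistandard tableaux of shape `lam` and content `μ`. The condition on `lam.card` excludes
entries outside `Fin m`, which `HasContent` leaves free. -/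
abbrev ContentTableau (μ : Fin m → ℕ) (lam : YoungDiagram) : Type :=
  {T : SemistandardYoungTableau lam // HasContent T μ ∧ lam.card = ∑ i, μ i}

theorem ContentTableau.entry_lt {μ : Fin m → ℕ} (T : ContentTableau μ lam) {i j : ℕ}
    (h : (i, j) ∈ lam) : T.1 i j < m :=
  Finset.filter_card_eq ((card_filter_lt_eq_sum T.2.1).trans T.2.2.symm) (i, j)
    ((lam.mem_cells _).2 h)

theorem hasContent_succ_iff {T : SemistandardYoungTableau lam} {μ : Fin (m + 1) → ℕ} :
    HasContent T μ ↔ HasContent T (Fin.init μ) ∧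
      (lam.cells.filter fun c => T c.1 c.2 = m).card = μ (Fin.last m) :=
  Fin.forall_fin_succ'

/-- The shape formed by the entries of `T` that are less than `m`. -/
def shapeLT (T : SemistandardYoungTableau lam) (m : ℕ) : YoungDiagram where
  cells := lam.cells.filter fun c => T c.1 c.2 < m
  isLowerSet := by
    rintro ⟨i, j⟩ ⟨i', j'⟩ ⟨hi, hj⟩ hc
    obtain ⟨hmem, hlt⟩ := Finset.mem_filter.1 hc
    have entry_le : T i' j' ≤ T i j :=
      (T.row_weak_of_le hj (lam.up_left_mem hi le_rfl hmem)).trans (T.col_weak hi hmem)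
    exact Finset.mem_filter.2 ⟨lam.up_left_mem hi hj hmem, entry_le.trans_lt hlt⟩

theorem mem_shapeLT {T : SemistandardYoungTableau lam} {i j : ℕ} :
    (i, j) ∈ shapeLT T m ↔ (i, j) ∈ lam ∧ T i j < m :=
  Finset.mem_filter

theorem isHorizontalStrip_shapeLT {T : SemistandardYoungTableau lam}
    (hT : ∀ {i j}, (i, j) ∈ lam → T i j < m + 1) : IsHorizontalStrip (shapeLT T m) lam where
  le _ hc := (mem_shapeLT.1 hc).1
  mem_of_succ_mem {i _} h := mem_shapeLT.2 ⟨lam.up_left_mem i.le_succ le_rfl h,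
    (T.col_strict i.lt_succ_self h).trans_le (Nat.le_of_lt_succ (hT h))⟩

/-- The restriction of a tableau to its entries less than `m`. -/
def restrictLT (T : SemistandardYoungTableau lam) (m : ℕ) :
    SemistandardYoungTableau (shapeLT T m) where
  entry i j := if (i, j) ∈ shapeLT T m then T i j else 0
  row_weak' {i j j'} hj h := by
    rw [if_pos h, if_pos ((shapeLT T m).up_left_mem le_rfl hj.le h)]
    exact T.row_weak hj (mem_shapeLT.1 h).1
  col_strict' {i i' j} hi h := by
    rw [if_pos h, if_pos ((shapeLT T m).up_left_mem hi.le le_rfl h)]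
    exact T.col_strict hi (mem_shapeLT.1 h).1
  zeros' h := if_neg h

theorem restrictLT_apply (T : SemistandardYoungTableau lam) (m i j : ℕ) :
    restrictLT T m i j = if (i, j) ∈ shapeLT T m then T i j else 0 :=
  rfl

theorem restrictLT_lt {T : SemistandardYoungTableau lam} {i j : ℕ} (h : (i, j) ∈ shapeLT T m) :
    restrictLT T m i j < m := by
  rw [restrictLT_apply, if_pos h]
  exact (mem_shapeLT.1 h).2

theorem hasContent_restrictLT {T : SemistandardYoungTableau lam} {μ : Fin m → ℕ} :
    HasContent (restrictLT T m) μ ↔ HasContent T μ := by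
  refine forall_congr' fun i => ?_
  suffices (shapeLT T m).cells.filter (fun c => restrictLT T m c.1 c.2 = i) =
      lam.cells.filter (fun c => T c.1 c.2 = i) by rw [this]
  ext ⟨r, s⟩
  rw [Finset.mem_filter, Finset.mem_filter, YoungDiagram.mem_cells, YoungDiagram.mem_cells,
    restrictLT_apply]
  have := i.2
  grind [mem_shapeLT]

/-- The extension of a tableau by a horizontal strip filled with the entry `m`. -/
def extend (T : SemistandardYoungTableau ρ) (hT : ∀ {i j}, (i, j) ∈ ρ → T i j < m)
    (h : IsHorizontalStrip ρ lam) : SemistandardYoungTableau lam where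
  entry i j := if (i, j) ∈ ρ then T i j else if (i, j) ∈ lam then m else 0
  row_weak' {i j j'} hj hmem := by
    have := lam.up_left_mem le_rfl hj.le hmem
    have : (i, j) ∈ ρ → T i j < m := hT
    have : (i, j') ∈ ρ → (i, j) ∈ ρ := ρ.up_left_mem le_rfl hj.le
    have : (i, j') ∈ ρ → T i j ≤ T i j' := T.row_weak hj
    grind
  col_strict' {i i' j} hi hmem := by
    have mem_ρ : (i, j) ∈ ρ :=
      h.mem_of_succ_mem (lam.up_left_mem (Nat.succ_le_of_lt hi) le_rfl hmem)
    have := hT mem_ρ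
    have : (i', j) ∈ ρ → T i j < T i' j := T.col_strict hi
    grind
  zeros' {i j} hmem := by
    rw [if_neg fun hρ => hmem (h.le hρ), if_neg hmem]

theorem extend_apply (T : SemistandardYoungTableau ρ) (hT : ∀ {i j}, (i, j) ∈ ρ → T i j < m)
    (h : IsHorizontalStrip ρ lam) (i j : ℕ) :
    extend T hT h i j = if (i, j) ∈ ρ then T i j else if (i, j) ∈ lam then m else 0 :=
  rfl

theorem shapeLT_extend (T : SemistandardYoungTableau ρ) (hT : ∀ {i j}, (i, j) ∈ ρ → T i j < m)
    (h : IsHorizontalStrip ρ lam) : shapeLT (extend T hT h) m = ρ := by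
  refine SetLike.ext fun ⟨i, j⟩ => ?_
  have : (i, j) ∈ ρ → (i, j) ∈ lam := fun hρ => h.le hρ
  have : (i, j) ∈ ρ → T i j < m := hT
  rw [mem_shapeLT, extend_apply]
  grind

theorem restrictLT_extend_apply (T : SemistandardYoungTableau ρ)
    (hT : ∀ {i j}, (i, j) ∈ ρ → T i j < m) (h : IsHorizontalStrip ρ lam) (i j : ℕ) :
    restrictLT (extend T hT h) m i j = T i j := by
  rw [restrictLT_apply, shapeLT_extend, extend_apply]
  split_ifs with hρ
  · rfl
  · exact (T.zeros hρ).symm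

theorem extend_restrictLT {T : SemistandardYoungTableau lam}
    (hT : ∀ {i j}, (i, j) ∈ lam → T i j < m + 1)
    (h : IsHorizontalStrip (shapeLT T m) lam) :
    extend (restrictLT T m) restrictLT_lt h = T := by
  ext i j
  have : (i, j) ∈ lam → T i j < m + 1 := hT
  have : (i, j) ∉ lam → T i j = 0 := T.zeros
  rw [extend_apply, restrictLT_apply]
  grind [mem_shapeLT]

theorem hasContent_extend {T : SemistandardYoungTableau ρ} {μ : Fin m → ℕ}
    (hT : ∀ {i j}, (i, j) ∈ ρ → T i j < m) (h : IsHorizontalStrip ρ lam) :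
    HasContent (extend T hT h) μ ↔ HasContent T μ := by
  refine forall_congr' fun i => ?_
  suffices lam.cells.filter (fun c => extend T hT h c.1 c.2 = i) =
      ρ.cells.filter (fun c => T c.1 c.2 = i) by rw [this]
  ext ⟨r, s⟩
  rw [Finset.mem_filter, Finset.mem_filter, YoungDiagram.mem_cells, YoungDiagram.mem_cells,
    extend_apply]
  have : (r, s) ∈ ρ → (r, s) ∈ lam := fun hρ => h.le hρ
  have := i.2
  grind

theorem card_filter_extend_eq (T : SemistandardYoungTableau ρ)
    (hT : ∀ {i j}, (i, j) ∈ ρ → T i j < m) (h : IsHorizontalStrip ρ lam) :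
    (lam.cells.filter fun c => extend T hT h c.1 c.2 = m).card = lam.card - ρ.card := by
  suffices lam.cells.filter (fun c => extend T hT h c.1 c.2 = m) = lam.cells \ ρ.cells by
    rw [this, Finset.card_sdiff_of_subset h.le]
  ext ⟨r, s⟩
  rw [Finset.mem_filter, Finset.mem_sdiff, YoungDiagram.mem_cells, YoungDiagram.mem_cells,
    extend_apply]
  have : (r, s) ∈ ρ → T r s < m := hT
  grind

theorem sigma_contentTableau_ext {a : ℕ} {μ : Fin m → ℕ}
    {x y : Σ ρ : StripRemoval a lam, ContentTableau μ ρ.1}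
    (shape_eq : x.1.1 = y.1.1) (entry_eq : ∀ i j, x.2.1 i j = y.2.1 i j) : x = y := by
  obtain ⟨⟨ρ, _⟩, T, _⟩ := x
  obtain ⟨⟨ρ', _⟩, T', _⟩ := y
  obtain rfl : ρ = ρ' := shape_eq
  obtain rfl : T = T' := SemistandardYoungTableau.ext entry_eq
  rfl

/-- Removing the cells with the largest letter from a tableau. -/
def removeLastLetterEquiv (μ : Fin (m + 1) → ℕ) (lam : YoungDiagram) :
    ContentTableau μ lam ≃
      Σ ρ : StripRemoval (μ (Fin.last m)) lam, ContentTableau (Fin.init μ) ρ.1 where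
  toFun T :=
    have content := (hasContent_succ_iff.1 T.2.1).1
    have card_shape : (shapeLT T.1 m).card = ∑ i, Fin.init μ i := card_filter_lt_eq_sum content
    ⟨⟨shapeLT T.1 m, isHorizontalStrip_shapeLT T.entry_lt, by
        rw [card_shape, T.2.2, Fin.sum_univ_castSucc]; rfl⟩,
      ⟨restrictLT T.1 m, hasContent_restrictLT.2 content, card_shape⟩⟩
  invFun x :=
    have strip := x.1.2.toIsHorizontalStrip
    ⟨extend x.2.1 x.2.entry_lt strip,
      hasContent_succ_iff.2 ⟨(hasContent_extend x.2.entry_lt strip).2 x.2.2.1, by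
        rw [card_filter_extend_eq, x.1.2.card_eq, Nat.add_sub_cancel_left]⟩, by
      rw [x.1.2.card_eq, x.2.2.2, Fin.sum_univ_castSucc]; rfl⟩
  left_inv T := Subtype.ext <| extend_restrictLT T.entry_lt (isHorizontalStrip_shapeLT T.entry_lt)
  right_inv x :=
    have strip := x.1.2.toIsHorizontalStrip
    sigma_contentTableau_ext (shapeLT_extend x.2.1 x.2.entry_lt strip)
      (restrictLT_extend_apply x.2.1 x.2.entry_lt strip)

end Tableaux

section Matrices

variable {m l : ℕ}

/-- The possible rows with sum `a` of a matrix with column sums `ν`. -/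
abbrev BoundedRow (a : ℕ) (ν : Fin l → ℕ) : Type :=
  {c : Fin l → ℕ // c ≤ ν ∧ ∑ j, c j = a}

/-- The matrices counted by `Nmat μ ν`. -/
abbrev ContingencyTable (μ : Fin m → ℕ) (ν : Fin l → ℕ) : Type :=
  {M : Fin m → Fin l → ℕ // (∀ i, ∑ j, M i j = μ i) ∧ ∀ j, ∑ i, M i j = ν j}

/-- Splitting off the last entry of a row. -/
def splitLastEntryEquiv (a : ℕ) (ν : Fin (l + 1) → ℕ) :
    BoundedRow a ν ≃
      Σ k : {k // k ≤ a ∧ k ≤ ν (Fin.last l)}, BoundedRow (a - k.1) (Fin.init ν) where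
  toFun c :=
    have sum_eq : ∑ j, Fin.init c.1 j + c.1 (Fin.last l) = a :=
      (Fin.sum_univ_castSucc c.1).symm.trans c.2.2
    ⟨⟨c.1 (Fin.last l), (Nat.le_add_left _ _).trans_eq sum_eq, c.2.1 _⟩,
      ⟨Fin.init c.1, fun j => c.2.1 j.castSucc, Nat.eq_sub_of_add_eq sum_eq⟩⟩
  invFun x := ⟨Fin.snoc x.2.1 x.1.1,
    Fin.forall_fin_succ'.2 ⟨fun j => by simpa [Fin.init] using x.2.2.1 j, by simpa using x.1.2.2⟩,
    by simp [Fin.sum_univ_castSucc, x.2.2.2, Nat.sub_add_cancel x.1.2.1]⟩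
  left_inv c := Subtype.ext (Fin.snoc_init_self c.1)
  right_inv x := Sigma.subtype_ext
    (Subtype.ext (Fin.snoc_last (α := fun _ => ℕ) x.1.1 x.2.1))
    (Fin.init_snoc (α := fun _ => ℕ) x.1.1 x.2.1)

/-- Splitting off the last row of a matrix. -/
def splitLastRowEquiv (μ : Fin (m + 1) → ℕ) (ν : Fin l → ℕ) :
    ContingencyTable μ ν ≃
      Σ c : BoundedRow (μ (Fin.last m)) ν, ContingencyTable (Fin.init μ) (ν - c.1) where
  toFun M :=
    have sum_eq (j : Fin l) : ∑ i, Fin.init M.1 i j + M.1 (Fin.last m) j = ν j :=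
      (Fin.sum_univ_castSucc fun i => M.1 i j).symm.trans (M.2.2 j)
    ⟨⟨M.1 (Fin.last m), fun j => (Nat.le_add_left _ _).trans_eq (sum_eq j), M.2.1 _⟩,
      ⟨Fin.init M.1, fun i => M.2.1 i.castSucc, fun j => Nat.eq_sub_of_add_eq (sum_eq j)⟩⟩
  invFun x := ⟨Fin.snoc x.2.1 x.1.1,
    Fin.forall_fin_succ'.2 ⟨fun i => by simpa [Fin.init] using x.2.2.1 i, by simpa using x.1.2.2⟩,
    fun j => by simp [Fin.sum_univ_castSucc, x.2.2.2, Nat.sub_add_cancel (x.1.2.1 j)]⟩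
  left_inv M := Subtype.ext (Fin.snoc_init_self M.1)
  right_inv x := Sigma.subtype_ext
    (Subtype.ext (Fin.snoc_last (α := fun _ => Fin l → ℕ) x.1.1 x.2.1))
    (Fin.init_snoc (α := fun _ => Fin l → ℕ) x.1.1 x.2.1)

end Matrices

section Correspondence

variable {m l : ℕ}

instance subsingleton_tableau_bot : Subsingleton (SemistandardYoungTableau ⊥) where
  allEq T T' := SemistandardYoungTableau.ext fun _ _ =>
    (T.zeros (YoungDiagram.notMem_bot _)).trans (T'.zeros (YoungDiagram.notMem_bot _)).symm

theorem ContentTableau.eq_bot {lam : YoungDiagram} {μ : Fin 0 → ℕ} (T : ContentTableau μ lam) :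
    lam = ⊥ :=
  YoungDiagram.ext (Finset.card_eq_zero.1 T.2.2)

/-- Exchanging the order of adding a horizontal strip to `α` and removing another one, by applying
the local rule to the shapes `α` and `β` before and after. -/
def exchangeStripsEquiv (X : YoungDiagram → Type*) (a b : ℕ) (α : YoungDiagram) :
    (Σ lam : StripExtension a α, Σ β : StripRemoval b lam.1, X β.1) ≃
      Σ k : {k // k ≤ a ∧ k ≤ b}, Σ ρ : StripRemoval (b - k.1) α,
        Σ β : StripExtension (a - k.1) ρ.1, X β.1 :=
  calc
    (Σ lam : StripExtension a α, Σ β : StripRemoval b lam.1, X β.1)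
    _ ≃ Σ β : YoungDiagram,
          {lam // IsHorizontalStripOfCard a α lam ∧ IsHorizontalStripOfCard b β lam} × X β :=
        { toFun x := ⟨x.2.1.1, ⟨x.1.1, x.1.2, x.2.1.2⟩, x.2.2⟩
          invFun x := ⟨⟨x.2.1.1, x.2.1.2.1⟩, ⟨x.1, x.2.1.2.2⟩, x.2.2⟩
          left_inv _ := rfl
          right_inv _ := rfl }
    _ ≃ Σ β : YoungDiagram,
          {p : ℕ × YoungDiagram // (p.1 ≤ a ∧ p.1 ≤ b) ∧ IsHorizontalStripOfCard (b - p.1) p.2 α ∧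
            IsHorizontalStripOfCard (a - p.1) p.2 β} × X β :=
        Equiv.sigmaCongrRight fun β => (localRuleEquiv α β a b).prodCongr (Equiv.refl _)
    _ ≃ _ :=
        { toFun x := ⟨⟨x.2.1.1.1, x.2.1.2.1⟩, ⟨x.2.1.1.2, x.2.1.2.2.1⟩, ⟨x.1, x.2.1.2.2.2⟩, x.2.2⟩
          invFun x := ⟨x.2.2.1.1, ⟨(x.1.1, x.2.1.1), x.1.2, x.2.1.2, x.2.2.1.2⟩, x.2.2.2⟩
          left_inv _ := rfl
          right_inv _ := rfl }

/-- `insertionEquiv` for the empty alphabet, where all shapes are empty and `a = 0`. -/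
def insertionEquivZero (ν : Fin 0 → ℕ) (a : ℕ) (α : YoungDiagram) :
    (Σ lam : StripExtension a α, ContentTableau ν lam.1) ≃
      Σ c : BoundedRow a ν, ContentTableau (ν - c.1) α :=
  haveI : Subsingleton (Σ lam : StripExtension a α, ContentTableau ν lam.1) := ⟨by
    rintro ⟨⟨lam, _⟩, T⟩ ⟨⟨lam', _⟩, T'⟩
    obtain rfl := T.eq_bot
    obtain rfl := T'.eq_bot
    rw [Subsingleton.elim T T']⟩
  haveI : Subsingleton (Σ c : BoundedRow a ν, ContentTableau (ν - c.1) α) := ⟨by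
    rintro ⟨c, T⟩ ⟨c', T'⟩
    obtain rfl := T.eq_bot
    obtain rfl := Subsingleton.elim c c'
    rw [Subsingleton.elim T T']⟩
  equivOfSubsingletonOfSubsingleton
    (fun x =>
      have card_eq_zero : α.card + a = 0 := x.1.2.card_eq.symm.trans x.2.2.2
      ⟨⟨ν, le_rfl, (Nat.add_eq_zero_iff.1 card_eq_zero).2.symm⟩,
        ⟨default, finZeroElim, (Nat.add_eq_zero_iff.1 card_eq_zero).1⟩⟩)
    (fun x => ⟨⟨α, x.1.2.2 ▸ isHorizontalStripOfCard_zero α⟩,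
      ⟨x.2.1, finZeroElim, x.2.2.2⟩⟩)

/-- Row insertion in terms of shapes: a tableau with content `ν` on an extension of `α` by a
horizontal strip with `a` cells arises from a tableau of shape `α` by inserting a row with sum `a`
of a matrix with column sums `ν`. -/
def insertionEquiv : ∀ {l : ℕ} (ν : Fin l → ℕ) (a : ℕ) (α : YoungDiagram),
    (Σ lam : StripExtension a α, ContentTableau ν lam.1) ≃
      Σ c : BoundedRow a ν, ContentTableau (ν - c.1) α
  | 0, ν, a, α => insertionEquivZero ν a α
  | l + 1, ν, a, α =>
    calc
      (Σ lam : StripExtension a α, ContentTableau ν lam.1)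
      _ ≃ Σ lam : StripExtension a α, Σ β : StripRemoval (ν (Fin.last l)) lam.1,
            ContentTableau (Fin.init ν) β.1 :=
          Equiv.sigmaCongrRight fun lam => removeLastLetterEquiv ν lam.1
      _ ≃ Σ k : {k // k ≤ a ∧ k ≤ ν (Fin.last l)}, Σ ρ : StripRemoval (ν (Fin.last l) - k.1) α,
            Σ β : StripExtension (a - k.1) ρ.1, ContentTableau (Fin.init ν) β.1 :=
          exchangeStripsEquiv (ContentTableau (Fin.init ν)) a _ α
      _ ≃ Σ k : {k // k ≤ a ∧ k ≤ ν (Fin.last l)}, Σ ρ : StripRemoval (ν (Fin.last l) - k.1) α,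
            Σ c : BoundedRow (a - k.1) (Fin.init ν), ContentTableau (Fin.init ν - c.1) ρ.1 :=
          Equiv.sigmaCongrRight fun k => Equiv.sigmaCongrRight fun ρ =>
            insertionEquiv (Fin.init ν) (a - k.1) ρ.1
      _ ≃ Σ x : (Σ k : {k // k ≤ a ∧ k ≤ ν (Fin.last l)}, BoundedRow (a - k.1) (Fin.init ν)),
            Σ ρ : StripRemoval (ν (Fin.last l) - x.1.1) α,
              ContentTableau (Fin.init ν - x.2.1) ρ.1 :=
          { toFun x := ⟨⟨x.1, x.2.2.1⟩, x.2.1, x.2.2.2⟩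
            invFun x := ⟨x.1.1, x.2.1, x.1.2, x.2.2⟩
            left_inv _ := rfl
            right_inv _ := rfl }
      _ ≃ Σ c : BoundedRow a ν, Σ ρ : StripRemoval ((ν - c.1) (Fin.last l)) α,
            ContentTableau (Fin.init (ν - c.1)) ρ.1 :=
          (Equiv.sigmaCongrLeft (splitLastEntryEquiv a ν)).symm
      _ ≃ Σ c : BoundedRow a ν, ContentTableau (ν - c.1) α :=
          Equiv.sigmaCongrRight fun c => (removeLastLetterEquiv (ν - c.1) α).symm

/-- `rskEquiv` for matrices without rows, where the only shape is empty. -/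
def rskEquivZero (μ : Fin 0 → ℕ) (ν : Fin l → ℕ) :
    (Σ lam : YoungDiagram, ContentTableau μ lam × ContentTableau ν lam) ≃ ContingencyTable μ ν :=
  haveI : Subsingleton (Σ lam : YoungDiagram, ContentTableau μ lam × ContentTableau ν lam) := ⟨by
    rintro ⟨lam, T⟩ ⟨lam', T'⟩
    obtain rfl := T.1.eq_bot
    obtain rfl := T'.1.eq_bot
    rw [Subsingleton.elim T T']⟩
  equivOfSubsingletonOfSubsingleton
    (fun x =>
      have sum_eq_zero : ∑ j, ν j = 0 := x.2.2.2.2.symm.trans x.2.1.2.2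
      ⟨finZeroElim, finZeroElim, fun j =>
        (Finset.sum_eq_zero_iff.1 sum_eq_zero j (Finset.mem_univ j)).symm⟩)
    (fun M => ⟨⊥, ⟨default, finZeroElim, rfl⟩,
      ⟨default, M.2.2, (Finset.sum_eq_zero fun j _ => (M.2.2 j).symm).symm⟩⟩)

/-- The Robinson–Schensted–Knuth correspondence between pairs of tableaux of the same shape with
contents `μ` and `ν` and matrices with row sums `μ` and column sums `ν`. -/
def rskEquiv : ∀ {m : ℕ} (μ : Fin m → ℕ) (ν : Fin l → ℕ),
    (Σ lam : YoungDiagram, ContentTableau μ lam × ContentTableau ν lam) ≃ ContingencyTable μ ν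
  | 0, μ, ν => rskEquivZero μ ν
  | m + 1, μ, ν =>
    calc
      (Σ lam : YoungDiagram, ContentTableau μ lam × ContentTableau ν lam)
      _ ≃ Σ lam : YoungDiagram, (Σ α : StripRemoval (μ (Fin.last m)) lam,
            ContentTableau (Fin.init μ) α.1) × ContentTableau ν lam :=
          Equiv.sigmaCongrRight fun lam => (removeLastLetterEquiv μ lam).prodCongr (Equiv.refl _)
      _ ≃ Σ α : YoungDiagram, ContentTableau (Fin.init μ) α ×
            Σ lam : StripExtension (μ (Fin.last m)) α, ContentTableau ν lam.1 :=
          { toFun x := ⟨x.2.1.1.1, x.2.1.2, ⟨x.1, x.2.1.1.2⟩, x.2.2⟩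
            invFun x := ⟨x.2.2.1.1, ⟨⟨x.1, x.2.2.1.2⟩, x.2.1⟩, x.2.2.2⟩
            left_inv _ := rfl
            right_inv _ := rfl }
      _ ≃ Σ α : YoungDiagram, ContentTableau (Fin.init μ) α ×
            Σ c : BoundedRow (μ (Fin.last m)) ν, ContentTableau (ν - c.1) α :=
          Equiv.sigmaCongrRight fun α => (Equiv.refl _).prodCongr (insertionEquiv ν _ α)
      _ ≃ Σ c : BoundedRow (μ (Fin.last m)) ν, Σ α : YoungDiagram,
            ContentTableau (Fin.init μ) α × ContentTableau (ν - c.1) α :=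
          { toFun x := ⟨x.2.2.1, x.1, x.2.1, x.2.2.2⟩
            invFun x := ⟨x.2.1, x.2.2.1, x.1, x.2.2.2⟩
            left_inv _ := rfl
            right_inv _ := rfl }
      _ ≃ Σ c : BoundedRow (μ (Fin.last m)) ν, ContingencyTable (Fin.init μ) (ν - c.1) :=
          Equiv.sigmaCongrRight fun c => rskEquiv (Fin.init μ) (ν - c.1)
      _ ≃ ContingencyTable μ ν :=
          (splitLastRowEquiv μ ν).symm

/-- Pairs of tableaux whose common shape is a partition of `n`, with the condition on the number
of cells distributed over the two tableaux. -/
def tableauPairEquiv {n : ℕ} {μ : Fin m → ℕ} {ν : Fin l → ℕ} (hμs : ∑ i, μ i = n)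
    (hνs : ∑ j, ν j = n) :
    {x : Σ lam : YoungDiagram, SemistandardYoungTableau lam × SemistandardYoungTableau lam //
      x.1.card = n ∧ HasContent x.2.1 μ ∧ HasContent x.2.2 ν} ≃
    Σ lam : YoungDiagram, ContentTableau μ lam × ContentTableau ν lam where
  toFun x := ⟨x.1.1, ⟨x.1.2.1, x.2.2.1, x.2.1.trans hμs.symm⟩,
    ⟨x.1.2.2, x.2.2.2, x.2.1.trans hνs.symm⟩⟩
  invFun x := ⟨⟨x.1, x.2.1.1, x.2.2.1⟩, x.2.1.2.2.trans hμs, x.2.1.2.1, x.2.2.2.1⟩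
  left_inv _ := rfl
  right_inv _ := rfl

end Correspondence

end RSK

theorem sum_kostka_mul_kostka_general {n m l : ℕ} (μ : Fin m → ℕ) (ν : Fin l → ℕ)
    (hμs : ∑ i, μ i = n) (hνs : ∑ j, ν j = n) :
    Nat.card {x : Σ lam : YoungDiagram,
        SemistandardYoungTableau lam × SemistandardYoungTableau lam //
        x.1.card = n ∧ HasContent x.2.1 μ ∧ HasContent x.2.2 ν} =
      Nmat μ ν :=
  Nat.card_congr ((RSK.tableauPairEquiv hμs hνs).trans (RSK.rskEquiv μ ν))

/-- `∑_{λ ⊢ n} K_{λ,μ} K_{λ,ν} = N_{μ,ν}`: the number of pairs `(P, Q)` of semistandard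
Young tableaux of the same shape (a partition of `n`), with `P` of content `μ` and `Q` of
content `ν`, equals the number of non-negative integer matrices with row sums `μ` and
column sums `ν`. -/
theorem sum_kostka_mul_kostka (n : ℕ) (hn : 1 ≤ n) (m l : ℕ)
    (μ : Fin m → ℕ) (ν : Fin l → ℕ)
    (hμa : Antitone μ) (hμp : ∀ i, 0 < μ i) (hμs : ∑ i, μ i = n)
    (hνa : Antitone ν) (hνp : ∀ j, 0 < ν j) (hνs : ∑ j, ν j = n) :
    Nat.card {x : Σ lam : YoungDiagram,
        SemistandardYoungTableau lam × SemistandardYoungTableau lam //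
        x.1.card = n ∧ HasContent x.2.1 μ ∧ HasContent x.2.2 ν} =
      Nmat μ ν :=
  sum_kostka_mul_kostka_general μ ν hμs hνs
end

section
/- Let m_1,…,m_k and n_1,…,n_ℓ be positive integers with m_1·m_2·…·m_k = n_1·n_2·…·n_ℓ. Then there exists a k×ℓ matrix (a_{i,j}) of positive integers such that Π_{j=1}^ℓ a_{i,j} = m_i for every i, and Π_{i=1}^k a_{i,j} = n_j for every j. -/
/-!
The divisor `m₁` of `n₁ ⋯ n_l` splits as `b₁ ⋯ b_l` with `b_j ∣ n_j`. The `b_j` form the first row,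
and cancelling `m₁` leaves `m₂ ⋯ m_k = ∏ (n_j / b_j)`, so the remaining rows come from induction
on `k`. Splitting is the defining property of a decomposition monoid. The induction starts from a
single row: an empty matrix cannot have columns whose products are nontrivial units `u` and `u⁻¹`.
-/

theorem isRegular_of_dvd {M : Type*} [CommSemigroup M] {a b : M} (hb : IsRegular b) (hab : a ∣ b) :
    IsRegular a := by
  obtain ⟨c, rfl⟩ := hab
  exact hb.of_mul_left

section DecompositionMonoid

variable {ι κ M : Type*} [CommMonoid M] [DecompositionMonoid M] {s : Finset ι} {t : Finset κ}

theorem exists_forall_dvd_and_prod_eq_of_dvd_prod (ht : t.Nonempty) {n : κ → M} {d : M}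
    (hd : d ∣ ∏ j ∈ t, n j) : ∃ b : κ → M, (∀ j ∈ t, b j ∣ n j) ∧ ∏ j ∈ t, b j = d := by
  classical
  induction ht using Finset.Nonempty.cons_induction generalizing d with
  | singleton j => exact ⟨fun _ ↦ d, by simpa using hd, by simp⟩
  | cons j t hj _ ih =>
    rw [Finset.prod_cons] at hd
    obtain ⟨x, y, hx, hy, rfl⟩ := exists_dvd_and_dvd_of_dvd_mul hd
    obtain ⟨b, hbn, rfl⟩ := ih hy
    have hne : ∀ j' ∈ t, j' ≠ j := fun _ hj' ↦ ne_of_mem_of_not_mem hj' hj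
    refine ⟨Function.update b j x, ?_, ?_⟩
    · rw [Finset.forall_mem_cons]
      refine ⟨by simpa using hx, fun j' hj' ↦ ?_⟩
      simpa [hne j' hj'] using hbn j' hj'
    · rw [Finset.prod_cons, Function.update_self, Finset.prod_update_of_notMem hj]

theorem exists_forall_mul_eq_of_mul_eq_prod (ht : t.Nonempty) {n : κ → M} {d e : M}
    (hd : IsRegular d) (h : d * e = ∏ j ∈ t, n j) :
    ∃ b c : κ → M, (∀ j ∈ t, b j * c j = n j) ∧ ∏ j ∈ t, b j = d ∧ ∏ j ∈ t, c j = e := by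
  obtain ⟨b, hbn, hb⟩ := exists_forall_dvd_and_prod_eq_of_dvd_prod ht (Dvd.intro e h)
  choose! c hc using hbn
  refine ⟨b, c, fun j hj ↦ (hc j hj).symm, hb, hd.left ?_⟩
  calc
    d * ∏ j ∈ t, c j = ∏ j ∈ t, b j * c j := by rw [Finset.prod_mul_distrib, hb]
    _ = ∏ j ∈ t, n j := Finset.prod_congr rfl fun j hj ↦ (hc j hj).symm
    _ = d * e := h.symm

theorem exists_gcd_matrix_general (hs : s.Nonempty) (ht : t.Nonempty)
    {m : ι → M} {n : κ → M} (hm : ∀ i ∈ s, IsRegular (m i))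
    (h : ∏ i ∈ s, m i = ∏ j ∈ t, n j) :
    ∃ a : ι → κ → M,
      (∀ i ∈ s, ∀ j ∈ t, IsRegular (a i j)) ∧
      (∀ i ∈ s, ∏ j ∈ t, a i j = m i) ∧
      (∀ j ∈ t, ∏ i ∈ s, a i j = n j) := by
  suffices ∃ a : ι → κ → M,
      (∀ i ∈ s, ∏ j ∈ t, a i j = m i) ∧ (∀ j ∈ t, ∏ i ∈ s, a i j = n j) by
    obtain ⟨a, hrow, hcol⟩ := this
    refine ⟨a, fun i hi j hj ↦ isRegular_of_dvd (hm i hi) ?_, hrow, hcol⟩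
    exact hrow i hi ▸ Finset.dvd_prod_of_mem (a i) hj
  classical
  induction hs using Finset.Nonempty.cons_induction generalizing n with
  | singleton i => exact ⟨fun _ ↦ n, by simpa using h.symm, by simp⟩
  | cons i s hi _ ih =>
    rw [Finset.forall_mem_cons] at hm
    rw [Finset.prod_cons] at h
    obtain ⟨b, c, hbc, hb, hc⟩ := exists_forall_mul_eq_of_mul_eq_prod ht hm.1 h
    obtain ⟨a, hrow, hcol⟩ := ih hm.2 hc.symm
    have hne : ∀ i' ∈ s, i' ≠ i := fun _ hi' ↦ ne_of_mem_of_not_mem hi' hi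
    refine ⟨Function.update a i b, ?_, fun j hj ↦ ?_⟩
    · rw [Finset.forall_mem_cons]
      refine ⟨by simpa using hb, fun i' hi' ↦ ?_⟩
      simpa [hne i' hi'] using hrow i' hi'
    · have hrest : ∏ i' ∈ s, Function.update a i b i' j = ∏ i' ∈ s, a i' j :=
        Finset.prod_congr rfl fun i' hi' ↦ by rw [Function.update_of_ne (hne i' hi')]
      rw [Finset.prod_cons, Function.update_self, hrest, hcol j hj, hbc j hj]

end DecompositionMonoid

/-- Vaughan–Wooley / Granville–Soundararajan: if `m_1 ⋯ m_k = n_1 ⋯ n_l` with all `m_i, n_j`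
positive integers, there is a `k × l` matrix `(a_{i,j})` of positive integers whose `i`-th row
has product `m_i` and whose `j`-th column has product `n_j`. -/
theorem exists_gcd_matrix (k l : ℕ) (hk : 1 ≤ k) (hl : 1 ≤ l)
    (m : Fin k → ℕ) (n : Fin l → ℕ)
    (hm : ∀ i, 0 < m i) (hn : ∀ j, 0 < n j)
    (h : ∏ i, m i = ∏ j, n j) :
    ∃ a : Fin k → Fin l → ℕ,
      (∀ i j, 0 < a i j) ∧
      (∀ i, ∏ j, a i j = m i) ∧
      (∀ j, ∏ i, a i j = n j) := by
  simpa [isRegular_iff_ne_zero, Nat.pos_iff_ne_zero] using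
    exists_gcd_matrix_general (s := .univ) (t := .univ) ⟨⟨0, hk⟩, Finset.mem_univ _⟩
      ⟨⟨0, hl⟩, Finset.mem_univ _⟩ (fun i _ ↦ .of_ne_zero (hm i).ne') h
end
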